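/- arXiv:2405.03508 — 2 statements merged into one kernel-verified Lean document; each statement's English description precedes it below -/
import Mathlib

section
/- The following are equivalent: (1) the orbit 𝒪 is finite; (2) there exists a subfield M of 𝕂 containing k(x) and k(y) that is a finite Galois extension of k(x) and of k(y) and such that the subgroup of Aut(M) generated by Gal(M|k(x)) and Gal(M|k(y)) is finite; (3) k is a proper subfield of k(x) ∩ k(y), i.e. there exists a nontrivial Galois invariant. -/
open IntermediateField
open scoped BigOperators Classical

set_option synthInstance.maxHeartbeats 1000000
set_option maxHeartbeats 1600000

noncomputable section

namespace QuadrantWalk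

variable {K : Type} [Field K] [Algebra ℂ K]

/-- Evaluation of the step (Laurent) polynomial `S(X,Y) = ∑ w_{i,j} X^i Y^j`
    at a pair of elements of a field. -/
def stepEval (St : Finset (ℤ × ℤ)) (w : ℤ × ℤ → ℂ) (u v : K) : K :=
  ∑ p ∈ St, algebraMap ℂ K (w p) * u ^ p.1 * v ^ p.2

/-- The step polynomial involves both `X` and `Y`. -/
def NotUnivariate (St : Finset (ℤ × ℤ)) : Prop :=
  (∃ p ∈ St, ∃ q ∈ St, p.1 ≠ q.1) ∧ ∃ p ∈ St, ∃ q ∈ St, p.2 ≠ q.2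

/-- The kernel polynomial `K̃(X,Y,t) = X^mx * Y^my * (1 - t·S(X,Y))` as an element of
`ℂ[X,Y,t]`, with variables `0 ↦ X`, `1 ↦ Y`, `2 ↦ t`. -/
def kernelPoly (St : Finset (ℤ × ℤ)) (w : ℤ × ℤ → ℂ) (mx my : ℕ) :
    MvPolynomial (Fin 3) ℂ :=
  MvPolynomial.X 0 ^ mx * MvPolynomial.X 1 ^ my -
    MvPolynomial.X 2 *
      ∑ p ∈ St, MvPolynomial.C (w p) *
        MvPolynomial.X 0 ^ (p.1 + (mx : ℤ)).toNat *
        MvPolynomial.X 1 ^ (p.2 + (my : ℤ)).toNat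

/-- `-mx` (resp. `-my`) is the smallest `X`-exponent (resp. `Y`-exponent) of the model. -/
structure ExponentBounds (St : Finset (ℤ × ℤ)) (mx my : ℕ) : Prop where
  lowerX : ∀ p ∈ St, -(mx : ℤ) ≤ p.1
  lowerY : ∀ p ∈ St, -(my : ℤ) ≤ p.2
  attainX : ∃ p ∈ St, p.1 = -(mx : ℤ)
  attainY : ∃ p ∈ St, p.2 = -(my : ℤ)

/-- `x`-adjacency : equal first coordinates and equal values of `S`. -/
def XAdj (St : Finset (ℤ × ℤ)) (w : ℤ × ℤ → ℂ) (a b : K × K) : Prop :=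
  a.1 = b.1 ∧ stepEval St w a.1 a.2 = stepEval St w b.1 b.2

/-- `y`-adjacency : equal second coordinates and equal values of `S`. -/
def YAdj (St : Finset (ℤ × ℤ)) (w : ℤ × ℤ → ℂ) (a b : K × K) : Prop :=
  a.2 = b.2 ∧ stepEval St w a.1 a.2 = stepEval St w b.1 b.2

/-- Adjacency. -/
def Adj (St : Finset (ℤ × ℤ)) (w : ℤ × ℤ → ℂ) (a b : K × K) : Prop :=
  XAdj St w a b ∨ YAdj St w a b

/-- The orbit of the walk: the equivalence class of `(x,y)` under the
reflexive-transitive closure of adjacency. -/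
def orbit (St : Finset (ℤ × ℤ)) (w : ℤ × ℤ → ℂ) (x y : K) : Set (K × K) :=
  {a | Relation.ReflTransGen (Adj St w) (x, y) a}

/-- `k = ℂ(S(x,y))`. -/
def kF (St : Finset (ℤ × ℤ)) (w : ℤ × ℤ → ℂ) (x y : K) : IntermediateField ℂ K :=
  adjoin ℂ {stepEval St w x y}

/-- `k(x) = ℂ(x, S(x,y))`. -/
def kxF (St : Finset (ℤ × ℤ)) (w : ℤ × ℤ → ℂ) (x y : K) : IntermediateField ℂ K :=
  adjoin ℂ {x, stepEval St w x y}

/-- `k(y) = ℂ(y, S(x,y))`. -/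
def kyF (St : Finset (ℤ × ℤ)) (w : ℤ × ℤ → ℂ) (x y : K) : IntermediateField ℂ K :=
  adjoin ℂ {y, stepEval St w x y}

/-- `k(x,y) = ℂ(x,y)`. -/
def kxyF (x y : K) : IntermediateField ℂ K := adjoin ℂ {x, y}

/-- `k(𝒪)`: the subfield generated over `k` by all coordinates of the orbit. -/
def orbitF (St : Finset (ℤ × ℤ)) (w : ℤ × ℤ → ℂ) (x y : K) : IntermediateField ℂ K :=
  adjoin ℂ ({stepEval St w x y} ∪ {z | ∃ a ∈ orbit St w x y, z = a.1 ∨ z = a.2})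

/-- The standing hypotheses: nonzero weights, a non-univariate step polynomial,
`x, y` algebraically independent over `ℂ`, and `𝕂` an algebraic closure of `ℂ(x,y)`. -/
structure Setting (St : Finset (ℤ × ℤ)) (w : ℤ × ℤ → ℂ) (x y : K) : Prop where
  weight_ne : ∀ p ∈ St, w p ≠ 0
  notUniv : NotUnivariate St
  indep : AlgebraicIndependent ℂ ![x, y]
  algClosed : IsAlgClosed K
  algebraic : Algebra.IsAlgebraic (kxyF x y) K

lemma self_mem_orbit (St : Finset (ℤ × ℤ)) (w : ℤ × ℤ → ℂ) (x y : K) :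
    (x, y) ∈ orbit St w x y := Relation.ReflTransGen.refl

lemma x_mem_orbitF (St : Finset (ℤ × ℤ)) (w : ℤ × ℤ → ℂ) (x y : K) :
    x ∈ orbitF St w x y := by
  apply subset_adjoin
  exact Set.mem_union_right _ ⟨(x, y), self_mem_orbit St w x y, Or.inl rfl⟩

lemma y_mem_orbitF (St : Finset (ℤ × ℤ)) (w : ℤ × ℤ → ℂ) (x y : K) :
    y ∈ orbitF St w x y := by
  apply subset_adjoin
  exact Set.mem_union_right _ ⟨(x, y), self_mem_orbit St w x y, Or.inr rfl⟩

lemma S_mem_orbitF (St : Finset (ℤ × ℤ)) (w : ℤ × ℤ → ℂ) (x y : K) :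
    stepEval St w x y ∈ orbitF St w x y := by
  apply subset_adjoin
  exact Set.mem_union_left _ rfl

lemma x_mem_kxF (St : Finset (ℤ × ℤ)) (w : ℤ × ℤ → ℂ) (x y : K) :
    x ∈ kxF St w x y :=
  subset_adjoin ℂ _ (Set.mem_insert _ _)

lemma S_mem_kxF (St : Finset (ℤ × ℤ)) (w : ℤ × ℤ → ℂ) (x y : K) :
    stepEval St w x y ∈ kxF St w x y :=
  subset_adjoin ℂ _ (Set.mem_insert_of_mem _ rfl)

lemma y_mem_kyF (St : Finset (ℤ × ℤ)) (w : ℤ × ℤ → ℂ) (x y : K) :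
    y ∈ kyF St w x y :=
  subset_adjoin ℂ _ (Set.mem_insert _ _)

lemma S_mem_kyF (St : Finset (ℤ × ℤ)) (w : ℤ × ℤ → ℂ) (x y : K) :
    stepEval St w x y ∈ kyF St w x y :=
  subset_adjoin ℂ _ (Set.mem_insert_of_mem _ rfl)

/-- The subgroup of `ℂ`-automorphisms of `M` fixing the subfield `E` pointwise. -/
def fixingAuts (E M : IntermediateField ℂ K) : Subgroup (↥M ≃ₐ[ℂ] ↥M) where
  carrier := {σ | ∀ (z : K) (_ : z ∈ E) (hzM : z ∈ M), σ ⟨z, hzM⟩ = ⟨z, hzM⟩}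
  one_mem' := fun _ _ _ => rfl
  mul_mem' := by
    intro σ τ hσ hτ z hzE hzM
    show σ (τ ⟨z, hzM⟩) = ⟨z, hzM⟩
    rw [hτ z hzE hzM, hσ z hzE hzM]
  inv_mem' := by
    intro σ hσ z hzE hzM
    show σ.symm ⟨z, hzM⟩ = ⟨z, hzM⟩
    conv_lhs => rw [← hσ z hzE hzM]
    exact σ.symm_apply_apply _

/-- The Galois group `G_x = Gal(k(𝒪)|k(x))`. -/
def Gx (St : Finset (ℤ × ℤ)) (w : ℤ × ℤ → ℂ) (x y : K) :
    Subgroup (↥(orbitF St w x y) ≃ₐ[ℂ] ↥(orbitF St w x y)) :=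
  fixingAuts (kxF St w x y) (orbitF St w x y)

/-- The Galois group `G_y = Gal(k(𝒪)|k(y))`. -/
def Gy (St : Finset (ℤ × ℤ)) (w : ℤ × ℤ → ℂ) (x y : K) :
    Subgroup (↥(orbitF St w x y) ≃ₐ[ℂ] ↥(orbitF St w x y)) :=
  fixingAuts (kyF St w x y) (orbitF St w x y)

/-- The Galois group `G_{xy} = Gal(k(𝒪)|k(x,y))`. -/
def Gxy (St : Finset (ℤ × ℤ)) (w : ℤ × ℤ → ℂ) (x y : K) :
    Subgroup (↥(orbitF St w x y) ≃ₐ[ℂ] ↥(orbitF St w x y)) :=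
  fixingAuts (kxyF x y) (orbitF St w x y)

/-- Extend an automorphism of an intermediate field to a map on all of `K`
(by the identity outside). -/
def extendAut {M : IntermediateField ℂ K} (σ : ↥M ≃ₐ[ℂ] ↥M) (z : K) : K :=
  if h : z ∈ M then (σ ⟨z, h⟩ : K) else z

/-- The coordinate-wise action of an automorphism on a `0`-chain. -/
def actChain {M : IntermediateField ℂ K} (σ : ↥M ≃ₐ[ℂ] ↥M)
    (γ : (K × K) →₀ ℂ) : (K × K) →₀ ℂ :=
  Finsupp.mapDomain (Prod.map (extendAut σ) (extendAut σ)) γ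

/-- Evaluation of a polynomial `P(X,Y,t)` at `(u, v, 1/S(x,y))` for `(u,v) = a`. -/
def evalPt (St : Finset (ℤ × ℤ)) (w : ℤ × ℤ → ℂ) (x y : K)
    (P : MvPolynomial (Fin 3) ℂ) (a : K × K) : K :=
  MvPolynomial.aeval ![a.1, a.2, (stepEval St w x y)⁻¹] P

/-- Evaluation of a polynomial `P(X,Y,t)` at `(x, y, 1/S(x,y))`. -/
def evalXY (St : Finset (ℤ × ℤ)) (w : ℤ × ℤ → ℂ) (x y : K)
    (P : MvPolynomial (Fin 3) ℂ) : K :=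
  evalPt St w x y P (x, y)

/-- Evaluation of the fraction `A/B` at `(a.1, a.2, 1/S(x,y))`. -/
def fracEval (St : Finset (ℤ × ℤ)) (w : ℤ × ℤ → ℂ) (x y : K)
    (A B : MvPolynomial (Fin 3) ℂ) (a : K × K) : K :=
  evalPt St w x y A a / evalPt St w x y B a

/-- Evaluation (orbit sum) of the fraction `A/B` on a `0`-chain. -/
def chainEval (St : Finset (ℤ × ℤ)) (w : ℤ × ℤ → ℂ) (x y : K)
    (A B : MvPolynomial (Fin 3) ℂ) (γ : (K × K) →₀ ℂ) : K :=
  γ.sum fun a c => algebraMap ℂ K c * fracEval St w x y A B a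

/-- A `0`-chain cancels decoupled fractions: the orbit sum of every regular fraction
of the form `F(X,t) + G(Y,t)` on it vanishes. -/
def CancelsDecoupled (St : Finset (ℤ × ℤ)) (w : ℤ × ℤ → ℂ) (mx my : ℕ)
    (x y : K) (α : (K × K) →₀ ℂ) : Prop :=
  ∀ A₁ B₁ A₂ B₂ : MvPolynomial (Fin 3) ℂ,
    A₁ ∈ MvPolynomial.supported ℂ ({0, 2} : Set (Fin 3)) →
    B₁ ∈ MvPolynomial.supported ℂ ({0, 2} : Set (Fin 3)) →
    A₂ ∈ MvPolynomial.supported ℂ ({1, 2} : Set (Fin 3)) →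
    B₂ ∈ MvPolynomial.supported ℂ ({1, 2} : Set (Fin 3)) →
    ¬ kernelPoly St w mx my ∣ B₁ → ¬ kernelPoly St w mx my ∣ B₂ →
    (α.sum fun a c =>
      algebraMap ℂ K c * (fracEval St w x y A₁ B₁ a + fracEval St w x y A₂ B₂ a)) = 0

/-- The field of fractions `ℂ(X,Y,t)`. -/
abbrev FF : Type := FractionRing (MvPolynomial (Fin 3) ℂ)

/-- The inclusion of `ℂ[X,Y,t]` into `ℂ(X,Y,t)`. -/
def toFF (P : MvPolynomial (Fin 3) ℂ) : FF := algebraMap (MvPolynomial (Fin 3) ℂ) FF P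

/-- The regular fraction `A/B` admits a Galois decoupling:
`A/B = F + G + K̃·R` with `F ∈ ℂ(X,t)`, `G ∈ ℂ(Y,t)` and `R` regular. -/
def AdmitsDecoupling (St : Finset (ℤ × ℤ)) (w : ℤ × ℤ → ℂ) (mx my : ℕ)
    (A B : MvPolynomial (Fin 3) ℂ) : Prop :=
  ∃ F₁ F₂ G₁ G₂ R₁ R₂ : MvPolynomial (Fin 3) ℂ,
    F₁ ∈ MvPolynomial.supported ℂ ({0, 2} : Set (Fin 3)) ∧
    F₂ ∈ MvPolynomial.supported ℂ ({0, 2} : Set (Fin 3)) ∧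
    G₁ ∈ MvPolynomial.supported ℂ ({1, 2} : Set (Fin 3)) ∧
    G₂ ∈ MvPolynomial.supported ℂ ({1, 2} : Set (Fin 3)) ∧
    ¬ kernelPoly St w mx my ∣ F₂ ∧ ¬ kernelPoly St w mx my ∣ G₂ ∧
    ¬ kernelPoly St w mx my ∣ R₂ ∧
    toFF A / toFF B =
      toFF F₁ / toFF F₂ + toFF G₁ / toFF G₂ +
        toFF (kernelPoly St w mx my) * (toFF R₁ / toFF R₂)

/-- `(I, J) = (A/B, Cc/D)` is a pair of Galois invariants: `I - J = K̃·R` with `R` regular. -/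
def IsInvariantPair (St : Finset (ℤ × ℤ)) (w : ℤ × ℤ → ℂ) (mx my : ℕ)
    (A B Cc D : MvPolynomial (Fin 3) ℂ) : Prop :=
  ∃ R₁ R₂ : MvPolynomial (Fin 3) ℂ, ¬ kernelPoly St w mx my ∣ R₂ ∧
    toFF A / toFF B - toFF Cc / toFF D =
      toFF (kernelPoly St w mx my) * (toFF R₁ / toFF R₂)

/-- A constant pair of Galois invariants: both members are equivalent to a
common fraction `c ∈ ℂ(t)` modulo `K̃`. -/
def IsConstantPair (St : Finset (ℤ × ℤ)) (w : ℤ × ℤ → ℂ) (mx my : ℕ)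
    (A B Cc D : MvPolynomial (Fin 3) ℂ) : Prop :=
  IsInvariantPair St w mx my A B Cc D ∧
  ∃ c₁ c₂ : MvPolynomial (Fin 3) ℂ,
    c₁ ∈ MvPolynomial.supported ℂ ({2} : Set (Fin 3)) ∧
    c₂ ∈ MvPolynomial.supported ℂ ({2} : Set (Fin 3)) ∧ c₂ ≠ 0 ∧
    IsInvariantPair St w mx my A B c₁ c₂ ∧ IsInvariantPair St w mx my Cc D c₁ c₂

/-- `(γx, γy)` is a pseudo-decoupling of `(x,y)`. -/
def PseudoDecoupling (St : Finset (ℤ × ℤ)) (w : ℤ × ℤ → ℂ) (mx my : ℕ)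
    (x y : K) (γx γy : (K × K) →₀ ℂ) : Prop :=
  ∀ A B : MvPolynomial (Fin 3) ℂ, ¬ kernelPoly St w mx my ∣ B →
    AdmitsDecoupling St w mx my A B →
      fracEval St w x y A B (x, y) =
          chainEval St w x y A B γx + chainEval St w x y A B γy ∧
        chainEval St w x y A B γx ∈ kxF St w x y ∧
        chainEval St w x y A B γy ∈ kyF St w x y

/-- `(gx, gy, a)` is a decoupling of `(x,y)` in the orbit. -/
def IsDecoupling (St : Finset (ℤ × ℤ)) (w : ℤ × ℤ → ℂ) (mx my : ℕ)
    (x y : K) (gx gy a : (K × K) →₀ ℂ) : Prop :=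
  Finsupp.single (x, y) (1 : ℂ) = gx + gy + a ∧
  (∀ σ ∈ Gx St w x y, actChain σ gx = gx) ∧
  (∀ σ ∈ Gy St w x y, actChain σ gy = gy) ∧
  CancelsDecoupled St w mx my x y a

/-- The `x`-part of the boundary of a `1`-chain. -/
def boundaryX (St : Finset (ℤ × ℤ)) (w : ℤ × ℤ → ℂ)
    (c : ((K × K) × (K × K)) →₀ ℂ) : (K × K) →₀ ℂ :=
  c.sum fun e coeff =>
    if XAdj St w e.1 e.2 then
      coeff • (Finsupp.single e.2 (1 : ℂ) - Finsupp.single e.1 (1 : ℂ)) else 0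

/-- The `y`-part of the boundary of a `1`-chain. -/
def boundaryY (St : Finset (ℤ × ℤ)) (w : ℤ × ℤ → ℂ)
    (c : ((K × K) × (K × K)) →₀ ℂ) : (K × K) →₀ ℂ :=
  c.sum fun e coeff =>
    if YAdj St w e.1 e.2 then
      coeff • (Finsupp.single e.2 (1 : ℂ) - Finsupp.single e.1 (1 : ℂ)) else 0

/-- The `0`-chain induced by a bicolored loop. -/
def IsBicoloredChain (St : Finset (ℤ × ℤ)) (w : ℤ × ℤ → ℂ) (x y : K)
    (α : (K × K) →₀ ℂ) : Prop :=
  ∃ (n : ℕ) (b : ℕ → K × K), 0 < n ∧ b (2 * n) = b 0 ∧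
    (∀ j < 2 * n, b j ∈ orbit St w x y) ∧
    (∀ i < n, XAdj St w (b (2 * i)) (b (2 * i + 1)) ∧
      YAdj St w (b (2 * i + 1)) (b (2 * i + 2))) ∧
    α = ∑ j ∈ Finset.range (2 * n), ((-1 : ℂ) ^ (j + 1)) • Finsupp.single (b j) (1 : ℂ)

/-- The `0`-chain `ω = (1/|𝒪|) ∑_{a ∈ 𝒪} a`. -/
def omegaChain (St : Finset (ℤ × ℤ)) (w : ℤ × ℤ → ℂ) (x y : K)
    (h : (orbit St w x y).Finite) : (K × K) →₀ ℂ :=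
  ((h.toFinset.card : ℂ))⁻¹ • ∑ a ∈ h.toFinset, Finsupp.single a (1 : ℂ)

/-- The average `[G]·γ = (1/|G|) ∑_{σ ∈ G} σ·γ` of a `0`-chain under a group. -/
def groupAverage {M : IntermediateField ℂ K} (G : Subgroup (↥M ≃ₐ[ℂ] ↥M))
    (γ : (K × K) →₀ ℂ) : (K × K) →₀ ℂ :=
  ((Nat.card G : ℂ))⁻¹ • ∑ᶠ σ ∈ (G : Set (↥M ≃ₐ[ℂ] ↥M)), actChain σ γ

/-- `ℂ[X,t]` (two variables: `0` and `1`). -/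
abbrev MvP2 : Type := MvPolynomial (Fin 2) ℂ

/-- `ℂ(X,t)`, the fraction field of `ℂ[X,t]`. -/
abbrev CXt : Type := FractionRing MvP2

/-- Constants `ℂ → ℂ(X,t)`. -/
def cconst : ℂ →+* CXt := (algebraMap MvP2 CXt).comp (MvPolynomial.C)

/-- The first generator of `ℂ(X,t)`. -/
def gen0 : CXt := algebraMap MvP2 CXt (MvPolynomial.X 0)

/-- The second generator of `ℂ(X,t)`. -/
def gen1 : CXt := algebraMap MvP2 CXt (MvPolynomial.X 1)

/-- The kernel polynomial viewed as a polynomial in `Y` over `ℂ(X,t)`. -/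
def kernelInY (St : Finset (ℤ × ℤ)) (w : ℤ × ℤ → ℂ) (mx my : ℕ) :
    Polynomial CXt :=
  MvPolynomial.eval₂ ((Polynomial.C : CXt →+* Polynomial CXt).comp cconst)
    ![Polynomial.C gen0, Polynomial.X, Polynomial.C gen1]
    (kernelPoly St w mx my)

/-- The kernel polynomial viewed as a polynomial in `X` over `ℂ(Y,t)`. -/
def kernelInX (St : Finset (ℤ × ℤ)) (w : ℤ × ℤ → ℂ) (mx my : ℕ) :
    Polynomial CXt :=
  MvPolynomial.eval₂ ((Polynomial.C : CXt →+* Polynomial CXt).comp cconst)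
    ![Polynomial.X, Polynomial.C gen0, Polynomial.C gen1]
    (kernelPoly St w mx my)

/-- The kernel polynomial viewed as a polynomial in `X, Y` over `ℂ(t)`. -/
def kernelInXY (St : Finset (ℤ × ℤ)) (w : ℤ × ℤ → ℂ) (mx my : ℕ) :
    MvPolynomial (Fin 2) (RatFunc ℂ) :=
  MvPolynomial.eval₂
    ((MvPolynomial.C : RatFunc ℂ →+* MvPolynomial (Fin 2) (RatFunc ℂ)).comp
      (RatFunc.C : ℂ →+* RatFunc ℂ))
    ![MvPolynomial.X 0, MvPolynomial.X 1, MvPolynomial.C RatFunc.X]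
    (kernelPoly St w mx my)

/-- The specialization `K̃(x, Y, 1/S(x,y))` as a polynomial in `Y` over `k(x)`. -/
def kernelAtX (St : Finset (ℤ × ℤ)) (w : ℤ × ℤ → ℂ) (mx my : ℕ) (x y : K) :
    Polynomial ↥(kxF St w x y) :=
  MvPolynomial.aeval
    ![Polynomial.C (⟨x, x_mem_kxF St w x y⟩ : kxF St w x y), Polynomial.X,
      Polynomial.C (⟨(stepEval St w x y)⁻¹, inv_mem (S_mem_kxF St w x y)⟩ : kxF St w x y)]
    (kernelPoly St w mx my)

/-- The specialization `K̃(X, y, 1/S(x,y))` as a polynomial in `X` over `k(y)`. -/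
def kernelAtY (St : Finset (ℤ × ℤ)) (w : ℤ × ℤ → ℂ) (mx my : ℕ) (x y : K) :
    Polynomial ↥(kyF St w x y) :=
  MvPolynomial.aeval
    ![Polynomial.X, Polynomial.C (⟨y, y_mem_kyF St w x y⟩ : kyF St w x y),
      Polynomial.C (⟨(stepEval St w x y)⁻¹, inv_mem (S_mem_kyF St w x y)⟩ : kyF St w x y)]
    (kernelPoly St w mx my)

/-- Values of regular fractions with numerator and denominator supported on a set
of variables. -/
def regRange (St : Finset (ℤ × ℤ)) (w : ℤ × ℤ → ℂ) (x y : K) (mx my : ℕ)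
    (s : Set (Fin 3)) : Set K :=
  {z | ∃ A B : MvPolynomial (Fin 3) ℂ,
    A ∈ MvPolynomial.supported ℂ s ∧ B ∈ MvPolynomial.supported ℂ s ∧
    ¬ kernelPoly St w mx my ∣ B ∧ z = evalXY St w x y A / evalXY St w x y B}

end QuadrantWalk
namespace QuadrantWalk

section

variable {K : Type} [Field K] [Algebra ℂ K]

theorem linearIndependent_zpow {F L : Type*} [Field F] [Field L] [Algebra F L] {y : L}
    (hy : Transcendental F y) : LinearIndependent F (fun n : ℤ => y ^ n) := by
  have hy0 : y ≠ 0 := by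
    rintro rfl
    exact hy isAlgebraic_zero
  rw [linearIndependent_iff']
  intro s g hg i hi
  obtain ⟨N, hN⟩ : ∃ N : ℕ, ∀ n ∈ s, 0 ≤ n + (N : ℤ) := by
    refine ⟨∑ n ∈ s, n.natAbs, fun n hn => ?_⟩
    have := Finset.single_le_sum (f := fun n : ℤ => n.natAbs) (fun _ _ => Nat.zero_le _) hn
    omega
  set P : Polynomial F := ∑ n ∈ s, Polynomial.C (g n) * Polynomial.X ^ (n + (N : ℤ)).toNat with hP
  have hP0 : Polynomial.aeval y P = 0 := by
    have : Polynomial.aeval y P = (∑ n ∈ s, g n • y ^ n) * y ^ N := by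
      rw [hP, map_sum, Finset.sum_mul]
      refine Finset.sum_congr rfl fun n hn => ?_
      rw [map_mul, Polynomial.aeval_C, map_pow, Polynomial.aeval_X, Algebra.smul_def, mul_assoc,
        ← zpow_natCast y N, ← zpow_add₀ hy0, ← zpow_natCast, Int.toNat_of_nonneg (hN n hn)]
    rw [this, hg, zero_mul]
  have hPz : P = 0 := by
    by_contra h
    exact hy ⟨P, h, hP0⟩
  have hc : P.coeff (i + (N : ℤ)).toNat = g i := by
    rw [hP, Polynomial.finsetSum_coeff, Finset.sum_eq_single i]
    · simp
    · intro n hn hni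
      rw [Polynomial.coeff_C_mul_X_pow, if_neg]
      have := hN n hn
      have := hN i hi
      omega
    · exact fun h => absurd hi h
  rw [← hc, hPz, Polynomial.coeff_zero]

theorem isAlgebraic_of_sum_zpow_eq {ι F L : Type*} [Field F] [Field L] [Algebra F L] (s : Finset ι)
    (c : ι → F) (n : ι → ℤ) (a : F) {y : L} {j : ℤ} (hj : j ≠ 0)
    (hcj : ∑ p ∈ s with n p = j, c p ≠ 0)
    (h : ∑ p ∈ s, algebraMap F L (c p) * y ^ n p = algebraMap F L a) : IsAlgebraic F y := by
  by_contra hy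
  have hli := linearIndependent_zpow (F := F) hy
  rw [linearIndependent_iff] at hli
  have h0 := hli (∑ p ∈ s, Finsupp.single (n p) (c p) - Finsupp.single 0 a) (by
    simp only [map_sub, map_sum, Finsupp.linearCombination_single, Algebra.smul_def, h, zpow_zero,
      mul_one, sub_self])
  apply hcj
  have h1 := DFunLike.congr_fun h0 j
  simpa [Finsupp.single_apply, Finset.sum_filter, hj.symm] using h1

theorem isAlgebraic_of_isAlgebraic_adjoin {E : Type*} [Field E] [Algebra ℂ E] [Algebra E K]
    [IsScalarTower ℂ E K] {s : Set K} (hs : ∀ t ∈ s, IsAlgebraic E t) {z : K}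
    (hz : IsAlgebraic (adjoin ℂ s) z) : IsAlgebraic E z := by
  have hle : adjoin ℂ s ≤ (algebraicClosure E K).restrictScalars ℂ :=
    adjoin_le_iff.2 fun t ht => mem_algebraicClosure_iff.2 (hs t ht)
  have h1 : IsAlgebraic (algebraicClosure E K) z := by
    let : Algebra (adjoin ℂ s) (algebraicClosure E K) := (inclusion hle).toRingHom.toAlgebra
    have : IsScalarTower (adjoin ℂ s) (algebraicClosure E K) K := .of_algebraMap_eq fun _ => rfl
    exact hz.tower_top _
  exact h1.restrictScalars E

theorem sum_weight_zpow_ne_zero {St : Finset (ℤ × ℤ)} {w : ℤ × ℤ → ℂ} {x : K}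
    (hw : ∀ p ∈ St, w p ≠ 0) (hx : Transcendental ℂ x) {q : ℤ × ℤ} (hq : q ∈ St) :
    ∑ p ∈ St with p.2 = q.2, algebraMap ℂ K (w p) * x ^ p.1 ≠ 0 := by
  intro h
  have hli := linearIndependent_zpow hx
  rw [linearIndependent_iff] at hli
  have h0 := hli (∑ p ∈ St with p.2 = q.2, Finsupp.single p.1 (w p)) (by
    simpa only [map_sum, Finsupp.linearCombination_single, Algebra.smul_def] using h)
  have h1 := DFunLike.congr_fun h0 q.1
  rw [Finsupp.finsetSum_apply, Finset.sum_eq_single q] at h1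
  · exact hw q hq (by simpa using h1)
  · intro p hp hpq
    rw [Finsupp.single_apply, if_neg]
    exact fun h => hpq (Prod.ext h (Finset.mem_filter.1 hp).2)
  · intro h
    simp [hq] at h

theorem isAlgebraic_of_stepEval_mem {St : Finset (ℤ × ℤ)} {w : ℤ × ℤ → ℂ} {x v : K}
    (hw : ∀ p ∈ St, w p ≠ 0) (hSt : NotUnivariate St) (hx : Transcendental ℂ x)
    {E : IntermediateField ℂ K} (hxE : x ∈ E) (hSE : stepEval St w x v ∈ E) :
    IsAlgebraic E v := by
  obtain ⟨q, hq, hq0⟩ : ∃ q ∈ St, q.2 ≠ 0 := by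
    obtain ⟨p, hp, q, hq, hpq⟩ := hSt.2
    by_cases h : p.2 = 0
    · exact ⟨q, hq, fun h' => hpq (h.trans h'.symm)⟩
    · exact ⟨p, hp, h⟩
  refine isAlgebraic_of_sum_zpow_eq St
    (fun p => algebraMap ℂ E (w p) * (⟨x, hxE⟩ : E) ^ p.1) (fun p => p.2) ⟨_, hSE⟩ hq0 ?_ ?_
  · intro h
    apply sum_weight_zpow_ne_zero hw hx hq
    have h1 := congrArg (algebraMap E K) h
    simp only [map_sum, map_mul, map_zpow₀, map_zero] at h1
    exact h1
  · simp only [map_mul, map_zpow₀]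
    rfl

theorem isAlgebraic_of_mem_adjoin_simple {k E : IntermediateField ℂ K} (hkE : k ≤ E) {x z : K}
    (hz : z ∈ adjoin k {x}) (hzk : z ∉ k) (hzE : z ∈ E) : IsAlgebraic E x := by
  by_contra hx
  obtain ⟨r, s, rfl⟩ := mem_adjoin_simple_iff k z |>.1 hz
  by_cases hs : Polynomial.aeval x s = 0
  · exact hzk (by simp [hs])
  set z := Polynomial.aeval x r / Polynomial.aeval x s with hzdef
  let i : k →+* E := (inclusion hkE).toRingHom
  have hi : (algebraMap E K).comp i = algebraMap k K := rfl
  set P : Polynomial E := r.map i - Polynomial.C ⟨z, hzE⟩ * s.map i with hP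
  have hP0 : P = 0 := by
    by_contra h
    refine hx ⟨P, h, ?_⟩
    have h1 : ∀ t : Polynomial k, Polynomial.aeval x (t.map i) = Polynomial.aeval x t := by
      intro t
      rw [Polynomial.aeval_def, Polynomial.eval₂_map, hi, Polynomial.aeval_def]
    have h2 : algebraMap E K ⟨z, hzE⟩ = z := rfl
    rw [hP, map_sub, map_mul, h1, h1, Polynomial.aeval_C, h2, hzdef, div_mul_cancel₀ _ hs, sub_self]
  have hs0 : s ≠ 0 := by
    rintro rfl
    simp at hs
  obtain ⟨j, hj⟩ : ∃ j, s.coeff j ≠ 0 := by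
    by_contra! h
    exact hs0 (Polynomial.ext (by simpa using h))
  have hc := congrArg (fun Q => algebraMap E K (Q.coeff j)) hP0
  have hc' : (r.coeff j : K) - z * (s.coeff j : K) = 0 := by
    simp only [hP, Polynomial.coeff_sub, Polynomial.coeff_C_mul, Polynomial.coeff_map, map_sub,
      map_mul, Polynomial.coeff_zero, map_zero] at hc
    exact hc
  have hjK : (s.coeff j : K) ≠ 0 := by simpa using hj
  apply hzk
  have : z = (r.coeff j : K) / (s.coeff j : K) := by
    rw [eq_div_iff hjK]
    linear_combination -hc'
  rw [this]
  exact div_mem (r.coeff j).2 (s.coeff j).2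

theorem adjoin_simple_kF_eq (St : Finset (ℤ × ℤ)) (w : ℤ × ℤ → ℂ) (x y : K) :
    (adjoin (kF St w x y) {x}).restrictScalars ℂ = kxF St w x y := by
  rw [kF, kxF, adjoin_adjoin_left, Set.singleton_union, Set.pair_comm]

theorem stepEval_mem {St : Finset (ℤ × ℤ)} {w : ℤ × ℤ → ℂ} {u v : K} {E : IntermediateField ℂ K}
    (hu : u ∈ E) (hv : v ∈ E) : stepEval St w u v ∈ E :=
  sum_mem fun _ _ => mul_mem (mul_mem (E.algebraMap_mem _) (zpow_mem hu _)) (zpow_mem hv _)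

theorem isAlgebraic_of_mem {E : IntermediateField ℂ K} {z : K} (hz : z ∈ E) : IsAlgebraic E z :=
  isAlgebraic_algebraMap (⟨z, hz⟩ : E)

namespace Setting

variable {St : Finset (ℤ × ℤ)} {w : ℤ × ℤ → ℂ} {x y : K}

theorem transcendental_x (h : Setting St w x y) : Transcendental ℂ x := h.indep.transcendental 0

theorem transcendental_y_adjoin (h : Setting St w x y) : Transcendental (adjoin ℂ {x}) y := by
  have h1 := h.indep.transcendental_adjoin (s := {0}) (i := 1) (by simp)
  rw [Set.image_singleton] at h1
  exact transcendental_adjoin_iff.2 h1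

theorem algebra_isAlgebraic (h : Setting St w x y) {E : Type*} [Field E] [Algebra ℂ E] [Algebra E K]
    [IsScalarTower ℂ E K] (hx : IsAlgebraic E x) (hy : IsAlgebraic E y) :
    Algebra.IsAlgebraic E K := by
  refine ⟨fun z => isAlgebraic_of_isAlgebraic_adjoin (s := {x, y}) ?_ (h.algebraic.isAlgebraic z)⟩
  rintro t (rfl | rfl)
  exacts [hx, hy]

theorem isAlgebraic_snd (h : Setting St w x y) {v : K} {E : IntermediateField ℂ K}
    (hxE : x ∈ E) (hSE : stepEval St w x v ∈ E) : IsAlgebraic E v :=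
  isAlgebraic_of_stepEval_mem h.weight_ne h.notUniv h.transcendental_x hxE hSE

theorem isAlgClosure_kxF (h : Setting St w x y) : IsAlgClosure (kxF St w x y) K where
  isAlgClosed := h.algClosed
  isAlgebraic := h.algebra_isAlgebraic (isAlgebraic_of_mem (x_mem_kxF St w x y))
    (h.isAlgebraic_snd (x_mem_kxF St w x y) (S_mem_kxF St w x y))

theorem transcendental_stepEval (h : Setting St w x y) :
    Transcendental (adjoin ℂ {x}) (stepEval St w x y) := by
  intro hS
  refine h.transcendental_y_adjoin (isAlgebraic_of_isAlgebraic_adjoin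
    (s := {x, stepEval St w x y}) ?_ (h.isAlgebraic_snd (x_mem_kxF St w x y) (S_mem_kxF St w x y)))
  rintro t (rfl | rfl)
  exacts [isAlgebraic_of_mem (mem_adjoin_simple_self ℂ t), hS]

theorem transcendental_snd (h : Setting St w x y) {v : K}
    (hv : stepEval St w x v = stepEval St w x y) : Transcendental (adjoin ℂ {x}) v := by
  intro hva
  refine h.transcendental_stepEval (isAlgebraic_of_isAlgebraic_adjoin (s := {x, v}) ?_
    (isAlgebraic_of_mem (hv ▸ stepEval_mem ?_ ?_)))
  · rintro t (rfl | rfl)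
    exacts [isAlgebraic_of_mem (mem_adjoin_simple_self ℂ t), hva]
  · exact subset_adjoin ℂ _ (by simp)
  · exact subset_adjoin ℂ _ (by simp)

theorem not_isAlgebraic_kF (h : Setting St w x y) : ¬ IsAlgebraic (kF St w x y) x := by
  intro hx
  have hy : IsAlgebraic (kF St w x y) y :=
    isAlgebraic_of_isAlgebraic_adjoin (s := {x, stepEval St w x y}) (by
      rintro t (rfl | rfl)
      exacts [hx, isAlgebraic_of_mem (mem_adjoin_simple_self ℂ _)])
      (h.isAlgebraic_snd (x_mem_kxF St w x y) (S_mem_kxF St w x y))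
  have h1 := h.algebra_isAlgebraic hx hy
  have h2 : Algebra.IsAlgebraic (Algebra.adjoin ℂ {stepEval St w x y}) K :=
    isAlgebraic_adjoin_iff_top.1 h1
  have h3 : Algebra.trdeg ℂ K ≤ 1 := by
    simpa using Algebra.IsAlgebraic.trdeg_le_cardinalMk ℂ (A := K) {stepEval St w x y}
  have h4 := h.indep.cardinalMk_le_trdeg.trans h3
  simp at h4

theorem isAlgClosure_adjoin (h : Setting St w x y) {v : K}
    (hv : stepEval St w x v = stepEval St w x y) :
    IsAlgClosure (adjoin (adjoin ℂ {x}) {v}) K where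
  isAlgClosed := h.algClosed
  isAlgebraic := by
    have : IsScalarTower ℂ (adjoin (adjoin ℂ {x}) {v}) K := .of_algebraMap_eq fun _ => rfl
    have hx : x ∈ adjoin (adjoin ℂ {x}) {v} :=
      (adjoin (adjoin ℂ {x}) {v}).algebraMap_mem ⟨x, mem_adjoin_simple_self ℂ x⟩
    have hxa : IsAlgebraic (adjoin (adjoin ℂ {x}) {v}) x := isAlgebraic_algebraMap
      (⟨x, hx⟩ : adjoin (adjoin ℂ {x}) {v})
    have hS : stepEval St w x v ∈ (adjoin (adjoin ℂ {x}) {v}).restrictScalars ℂ :=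
      stepEval_mem hx (mem_adjoin_simple_self _ v)
    refine h.algebra_isAlgebraic hxa
      (isAlgebraic_of_isAlgebraic_adjoin (s := {x, stepEval St w x y}) ?_
        (h.isAlgebraic_snd (x_mem_kxF St w x y) (S_mem_kxF St w x y)))
    rintro t (rfl | rfl)
    · exact hxa
    · rw [← hv]
      exact isAlgebraic_algebraMap (⟨_, hS⟩ : adjoin (adjoin ℂ {x}) {v})

theorem exists_algEquiv (h : Setting St w x y) {v : K}
    (hv : stepEval St w x v = stepEval St w x y) :
    ∃ σ : K ≃ₐ[ℂ] K, σ x = x ∧ σ y = v := by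
  have := h.isAlgClosure_adjoin hv
  have := h.isAlgClosure_adjoin (v := y) rfl
  let e : adjoin (adjoin ℂ {x}) {y} ≃ₐ[adjoin ℂ {x}] adjoin (adjoin ℂ {x}) {v} :=
    (RatFunc.algEquivOfTranscendental y h.transcendental_y_adjoin).symm.trans
      (RatFunc.algEquivOfTranscendental v (h.transcendental_snd hv))
  have he : (e ⟨y, mem_adjoin_simple_self _ y⟩ : K) = v := by
    have h1 := RatFunc.algEquivOfTranscendental_symm_gen y h.transcendental_y_adjoin
    have h2 := RatFunc.algEquivOfTranscendental_X v (h.transcendental_snd hv)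
    exact (congrArg (fun r => (RatFunc.algEquivOfTranscendental v (h.transcendental_snd hv) r : K))
      h1).trans h2
  let f : K ≃+* K := IsAlgClosure.equivOfEquiv K K e.toRingEquiv
  have hf : ∀ z, f (algebraMap _ K z) = algebraMap _ K (e z) :=
    IsAlgClosure.equivOfEquiv_algebraMap K K e.toRingEquiv
  have hfF : ∀ z : adjoin ℂ {x}, f z = z := by
    intro z
    have := hf (algebraMap _ _ z)
    rw [e.commutes] at this
    exact this
  refine ⟨AlgEquiv.ofRingEquiv (f := f) fun c => hfF (algebraMap ℂ _ c),
    hfF ⟨x, mem_adjoin_simple_self ℂ x⟩, (hf ⟨y, mem_adjoin_simple_self _ y⟩).trans he⟩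

end Setting

theorem map_stepEval {L L' : Type*} [Field L] [Field L'] [Algebra ℂ L] [Algebra ℂ L']
    (φ : L →ₐ[ℂ] L') (St : Finset (ℤ × ℤ)) (w : ℤ × ℤ → ℂ) (u v : L) :
    φ (∑ p ∈ St, algebraMap ℂ L (w p) * u ^ p.1 * v ^ p.2) =
      ∑ p ∈ St, algebraMap ℂ L' (w p) * φ u ^ p.1 * φ v ^ p.2 := by
  simp only [map_sum, map_mul, map_zpow₀, AlgHom.commutes]

theorem coe_stepEval {M : IntermediateField ℂ K} (St : Finset (ℤ × ℤ)) (w : ℤ × ℤ → ℂ)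
    (φ : M →ₐ[ℂ] K) {u v : K} (hu : u ∈ M) (hv : v ∈ M) :
    stepEval St w (φ ⟨u, hu⟩) (φ ⟨v, hv⟩) = φ ⟨stepEval St w u v, stepEval_mem hu hv⟩ := by
  refine (map_stepEval φ St w ⟨u, hu⟩ ⟨v, hv⟩).symm.trans (congrArg φ (Subtype.ext ?_))
  exact map_stepEval M.val St w ⟨u, hu⟩ ⟨v, hv⟩

/-- The model with the roles of the two coordinates exchanged. -/
def swapSteps (St : Finset (ℤ × ℤ)) : Finset (ℤ × ℤ) :=
  St.map (Equiv.prodComm ℤ ℤ).toEmbedding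

theorem stepEval_swap (St : Finset (ℤ × ℤ)) (w : ℤ × ℤ → ℂ) (u v : K) :
    stepEval (swapSteps St) (w ∘ Prod.swap) v u = stepEval St w u v := by
  simp [stepEval, swapSteps, mul_right_comm]

theorem kxF_swap (St : Finset (ℤ × ℤ)) (w : ℤ × ℤ → ℂ) (x y : K) :
    kxF (swapSteps St) (w ∘ Prod.swap) y x = kyF St w x y := by
  rw [kxF, kyF, stepEval_swap]

theorem kF_swap (St : Finset (ℤ × ℤ)) (w : ℤ × ℤ → ℂ) (x y : K) :
    kF (swapSteps St) (w ∘ Prod.swap) y x = kF St w x y := by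
  rw [kF, kF, stepEval_swap]

theorem mem_fixingSubgroup_adjoin {s : Set K} {σ : K ≃ₐ[ℂ] K} (h : ∀ z ∈ s, σ z = z) :
    σ ∈ (adjoin ℂ s).fixingSubgroup := by
  rw [IntermediateField.mem_fixingSubgroup_iff]
  intro z hz
  induction hz using adjoin_induction with
  | mem z hz => exact h z hz
  | algebraMap c => exact σ.commutes c
  | add a b _ _ ha hb => rw [map_add, ha, hb]
  | inv a _ ha => rw [map_inv₀, ha]
  | mul a b _ _ ha hb => rw [map_mul, ha, hb]

theorem isAlgebraic_fst_of_mem {St : Finset (ℤ × ℤ)} {w : ℤ × ℤ → ℂ} {x y : K}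
    {E : IntermediateField ℂ K} {z : K} (hE : kF St w x y ≤ E)
    (hzE : z ∈ E) (hz : z ∈ kxF St w x y) (hzk : z ∉ kF St w x y) :
    IsAlgebraic E x :=
  isAlgebraic_of_mem_adjoin_simple hE ((adjoin_simple_kF_eq St w x y).ge hz) hzk hzE

theorem isAlgebraic_snd_of_mem {St : Finset (ℤ × ℤ)} {w : ℤ × ℤ → ℂ} {x y : K}
    {E : IntermediateField ℂ K} {z : K} (hE : kF St w x y ≤ E)
    (hzE : z ∈ E) (hz : z ∈ kyF St w x y) (hzk : z ∉ kF St w x y) :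
    IsAlgebraic E y := by
  rw [← kF_swap] at hE hzk
  rw [← kxF_swap] at hz
  exact isAlgebraic_fst_of_mem hE hzE hz hzk

namespace Setting

variable {St : Finset (ℤ × ℤ)} {w : ℤ × ℤ → ℂ} {x y : K}

theorem swap (h : Setting St w x y) : Setting (swapSteps St) (w ∘ Prod.swap) y x where
  weight_ne := by
    intro p hp
    obtain ⟨q, hq, rfl⟩ := Finset.mem_map.1 hp
    exact h.weight_ne q hq
  notUniv := by
    obtain ⟨⟨p, hp, q, hq, hpq⟩, ⟨p', hp', q', hq', hpq'⟩⟩ := h.notUniv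
    have hm : ∀ r ∈ St, r.swap ∈ swapSteps St := fun r hr => Finset.mem_map.2 ⟨r, hr, rfl⟩
    exact ⟨⟨_, hm p' hp', _, hm q' hq', hpq'⟩, ⟨_, hm p hp, _, hm q hq, hpq⟩⟩
  indep := by
    have h1 := h.indep.comp ![1, 0] (by decide)
    convert h1 using 1
    funext i
    fin_cases i <;> rfl
  algClosed := h.algClosed
  algebraic := by
    rw [kxyF, Set.pair_comm]
    exact h.algebraic

theorem isAlgClosure_kyF (h : Setting St w x y) : IsAlgClosure (kyF St w x y) K :=
  kxF_swap St w x y ▸ h.swap.isAlgClosure_kxF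

theorem exists_mem_fixingSubgroup_kxF (h : Setting St w x y) {v : K}
    (hv : stepEval St w x v = stepEval St w x y) :
    ∃ σ ∈ (kxF St w x y).fixingSubgroup, σ y = v := by
  obtain ⟨σ, hσx, hσy⟩ := h.exists_algEquiv hv
  refine ⟨σ, mem_fixingSubgroup_adjoin ?_, hσy⟩
  rintro z (rfl | rfl)
  · exact hσx
  · have h1 := map_stepEval (σ : K →ₐ[ℂ] K) St w x y
    change σ (stepEval St w x y) = stepEval St w (σ x) (σ y) at h1
    rw [h1, hσx, hσy, hv]

theorem exists_mem_fixingSubgroup_kyF (h : Setting St w x y) {u : K}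
    (hu : stepEval St w u y = stepEval St w x y) :
    ∃ σ ∈ (kyF St w x y).fixingSubgroup, σ x = u := by
  rw [← kxF_swap]
  exact h.swap.exists_mem_fixingSubgroup_kxF (by rw [stepEval_swap, stepEval_swap, hu])

/-- The orbit is contained in the orbit of `(x, y)` under the group generated by the absolute
Galois groups of `k(x)` and `k(y)`. -/
theorem exists_eq_of_mem_orbit (h : Setting St w x y) {a : K × K} (ha : a ∈ orbit St w x y) :
    ∃ g ∈ (kxF St w x y).fixingSubgroup ⊔ (kyF St w x y).fixingSubgroup, a = (g x, g y) := by
  induction ha with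
  | refl => exact ⟨1, one_mem _, rfl⟩
  | @tail a b _ hab ih =>
    obtain ⟨g, hg, rfl⟩ := ih
    have hS : ∀ u v, stepEval St w (g u) (g v) = g (stepEval St w u v) :=
      fun u v => (map_stepEval (g : K →ₐ[ℂ] K) St w u v).symm
    obtain ⟨u, hu⟩ := g.surjective b.1
    obtain ⟨v, hv⟩ := g.surjective b.2
    rcases hab with ⟨h1, h2⟩ | ⟨h1, h2⟩
    · have hux : u = x := g.injective (hu.trans h1.symm)
      subst hux
      simp only [← hu, ← hv, hS] at h2
      obtain ⟨σ, hσ, hσy⟩ := h.exists_mem_fixingSubgroup_kxF (g.injective h2).symm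
      refine ⟨g * σ, mul_mem hg (Subgroup.mem_sup_left hσ), Prod.ext ?_ ?_⟩
      · exact hu.symm.trans (congrArg g
          ((IntermediateField.mem_fixingSubgroup_iff _ _).1 hσ _ (x_mem_kxF St w _ y)).symm)
      · exact hv.symm.trans (congrArg g hσy.symm)
    · have hvy : v = y := g.injective (hv.trans h1.symm)
      subst hvy
      simp only [← hu, ← hv, hS] at h2
      obtain ⟨σ, hσ, hσx⟩ := h.exists_mem_fixingSubgroup_kyF (g.injective h2).symm
      refine ⟨g * σ, mul_mem hg (Subgroup.mem_sup_right hσ), Prod.ext ?_ ?_⟩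
      · exact hu.symm.trans (congrArg g hσx.symm)
      · exact hv.symm.trans (congrArg g
          ((IntermediateField.mem_fixingSubgroup_iff _ _).1 hσ _ (y_mem_kyF St w x _)).symm)

theorem finite_orbit_of_invariant (h : Setting St w x y) {z : K}
    (hz : z ∈ kxF St w x y ⊓ kyF St w x y) (hzk : z ∉ kF St w x y) :
    (orbit St w x y).Finite := by
  set E := kxF St w x y ⊓ kyF St w x y with hE
  have hkE : kF St w x y ≤ E := adjoin_simple_le_iff.2 ⟨S_mem_kxF St w x y, S_mem_kyF St w x y⟩
  have hG : (kxF St w x y).fixingSubgroup ⊔ (kyF St w x y).fixingSubgroup ≤ E.fixingSubgroup :=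
    sup_le (fixingSubgroup_antitone inf_le_left) (fixingSubgroup_antitone inf_le_right)
  have hroot : ∀ {t : K}, IsAlgebraic E t → ∀ g ∈ E.fixingSubgroup,
      g t ∈ (minpoly E t).rootSet K := by
    intro t ht g hg
    rw [Polynomial.mem_rootSet]
    refine ⟨minpoly.ne_zero ht.isIntegral, ?_⟩
    have h1 := Polynomial.aeval_algHom_apply
      (fixingSubgroupEquiv E ⟨g, hg⟩ : K →ₐ[E] K) t (minpoly E t)
    rw [minpoly.aeval, map_zero] at h1
    exact h1
  refine (((minpoly E x).rootSet_finite K).prod ((minpoly E y).rootSet_finite K)).subset ?_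
  intro a ha
  obtain ⟨g, hg, rfl⟩ := h.exists_eq_of_mem_orbit ha
  exact ⟨hroot (isAlgebraic_fst_of_mem hkE hz hz.1 hzk) g (hG hg),
    hroot (isAlgebraic_snd_of_mem hkE hz hz.2 hzk) g (hG hg)⟩

end Setting

theorem fst_mem_orbitF {St : Finset (ℤ × ℤ)} {w : ℤ × ℤ → ℂ} {x y : K} {a : K × K}
    (ha : a ∈ orbit St w x y) : a.1 ∈ orbitF St w x y :=
  subset_adjoin ℂ _ (Set.mem_union_right _ ⟨a, ha, Or.inl rfl⟩)

theorem snd_mem_orbitF {St : Finset (ℤ × ℤ)} {w : ℤ × ℤ → ℂ} {x y : K} {a : K × K}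
    (ha : a ∈ orbit St w x y) : a.2 ∈ orbitF St w x y :=
  subset_adjoin ℂ _ (Set.mem_union_right _ ⟨a, ha, Or.inr rfl⟩)

theorem kxF_le_orbitF (St : Finset (ℤ × ℤ)) (w : ℤ × ℤ → ℂ) (x y : K) :
    kxF St w x y ≤ orbitF St w x y := by
  refine adjoin_le_iff.2 ?_
  rintro z (rfl | rfl)
  exacts [x_mem_orbitF St w _ y, S_mem_orbitF St w x y]

theorem kyF_le_orbitF (St : Finset (ℤ × ℤ)) (w : ℤ × ℤ → ℂ) (x y : K) :
    kyF St w x y ≤ orbitF St w x y := by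
  refine adjoin_le_iff.2 ?_
  rintro z (rfl | rfl)
  exacts [y_mem_orbitF St w x _, S_mem_orbitF St w x y]

theorem map_mem_orbit {St : Finset (ℤ × ℤ)} {w : ℤ × ℤ → ℂ} {x y : K}
    (φ : orbitF St w x y →ₐ[ℂ] K)
    (h0 : (φ ⟨x, x_mem_orbitF St w x y⟩, φ ⟨y, y_mem_orbitF St w x y⟩) ∈ orbit St w x y)
    {a : K × K} (ha : a ∈ orbit St w x y) :
    (φ ⟨a.1, fst_mem_orbitF ha⟩, φ ⟨a.2, snd_mem_orbitF ha⟩) ∈ orbit St w x y := by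
  induction ha with
  | refl => exact h0
  | @tail a b ha hab ih =>
    have ha' : a ∈ orbit St w x y := ha
    have hb' : b ∈ orbit St w x y := ha.tail hab
    refine ih.tail ?_
    have hS : stepEval St w a.1 a.2 = stepEval St w b.1 b.2 →
        stepEval St w (φ ⟨a.1, fst_mem_orbitF ha'⟩) (φ ⟨a.2, snd_mem_orbitF ha'⟩) =
          stepEval St w (φ ⟨b.1, fst_mem_orbitF hb'⟩) (φ ⟨b.2, snd_mem_orbitF hb'⟩) := fun h => by
      rw [coe_stepEval, coe_stepEval]
      exact congrArg φ (Subtype.ext h)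
    exact hab.imp (fun h => ⟨congrArg φ (Subtype.ext h.1), hS h.2⟩)
      (fun h => ⟨congrArg φ (Subtype.ext h.1), hS h.2⟩)

/-- Every embedding of `k(𝒪)` that fixes `E` pointwise maps the orbit to itself. -/
def StabilizesOrbit (St : Finset (ℤ × ℤ)) (w : ℤ × ℤ → ℂ) (x y : K)
    (E : IntermediateField ℂ K) : Prop :=
  ∀ φ : orbitF St w x y →ₐ[ℂ] K,
    (∀ (z : K) (_ : z ∈ E) (hz : z ∈ orbitF St w x y), φ ⟨z, hz⟩ = z) →
      ∀ (a : K × K) (ha : a ∈ orbit St w x y),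
        (φ ⟨a.1, fst_mem_orbitF ha⟩, φ ⟨a.2, snd_mem_orbitF ha⟩) ∈ orbit St w x y

theorem stabilizesOrbit_kxF (St : Finset (ℤ × ℤ)) (w : ℤ × ℤ → ℂ) (x y : K) :
    StabilizesOrbit St w x y (kxF St w x y) := by
  intro φ hφ a ha
  refine map_mem_orbit φ (.single (.inl ⟨?_, ?_⟩)) ha
  · exact (hφ x (x_mem_kxF St w x y) _).symm
  · exact ((coe_stepEval St w φ _ _).trans (hφ _ (S_mem_kxF St w x y) _)).symm

theorem stabilizesOrbit_kyF (St : Finset (ℤ × ℤ)) (w : ℤ × ℤ → ℂ) (x y : K) :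
    StabilizesOrbit St w x y (kyF St w x y) := by
  intro φ hφ a ha
  refine map_mem_orbit φ (.single (.inr ⟨?_, ?_⟩)) ha
  · exact (hφ y (y_mem_kyF St w x y) _).symm
  · exact ((coe_stepEval St w φ _ _).trans (hφ _ (S_mem_kyF St w x y) _)).symm

theorem isGalois_of_normal (E : IntermediateField ℂ K) {L : Type*} [Field L] [Algebra E L]
    [Normal E L] : IsGalois E L :=
  have : CharZero E := charZero_of_injective_algebraMap (algebraMap ℂ E).injective
  ⟨⟩

namespace StabilizesOrbit

variable {St : Finset (ℤ × ℤ)} {w : ℤ × ℤ → ℂ} {x y : K} {E : IntermediateField ℂ K}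

theorem map_mem_orbit (hst : StabilizesOrbit St w x y E) (σ : K →ₐ[E] K) {a : K × K}
    (ha : a ∈ orbit St w x y) : (σ a.1, σ a.2) ∈ orbit St w x y :=
  hst ((σ.restrictScalars ℂ).comp (orbitF St w x y).val) (fun z hz _ => σ.commutes ⟨z, hz⟩) a ha

theorem isGalois (hst : StabilizesOrbit St w x y E) (hcl : IsAlgClosure E K)
    (hE : E ≤ orbitF St w x y) (hS : stepEval St w x y ∈ E) :
    IsGalois E (extendScalars hE) := by
  have : Normal E (extendScalars hE) := by
    refine IntermediateField.normal_iff_forall_map_le.2 fun σ => ?_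
    rintro _ ⟨z, hz, rfl⟩
    change σ z ∈ orbitF St w x y
    replace hz : z ∈ orbitF St w x y := hz
    induction hz using adjoin_induction with
    | mem z hz =>
      rcases hz with rfl | ⟨a, ha, rfl | rfl⟩
      · have hσS : σ (stepEval St w x y) = stepEval St w x y := σ.commutes ⟨_, hS⟩
        exact hE (hσS.symm ▸ hS)
      · exact fst_mem_orbitF (hst.map_mem_orbit σ ha)
      · exact snd_mem_orbitF (hst.map_mem_orbit σ ha)
    | algebraMap c =>
      exact ((σ.restrictScalars ℂ).commutes c).symm ▸ IntermediateField.algebraMap_mem _ c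
    | add a b _ _ iha ihb => exact map_add σ a b ▸ add_mem iha ihb
    | inv a _ iha => exact map_inv₀ σ a ▸ inv_mem iha
    | mul a b _ _ iha ihb => exact map_mul σ a b ▸ mul_mem iha ihb
  exact isGalois_of_normal E

theorem fixingAuts_mem_orbit (hst : StabilizesOrbit St w x y E)
    {σ : orbitF St w x y ≃ₐ[ℂ] orbitF St w x y} (hσ : σ ∈ fixingAuts E (orbitF St w x y))
    {a : orbitF St w x y × orbitF St w x y} (ha : ((a.1 : K), (a.2 : K)) ∈ orbit St w x y) :
    ((σ a.1 : K), (σ a.2 : K)) ∈ orbit St w x y :=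
  hst ((orbitF St w x y).val.comp σ) (fun z hz hzM => congrArg Subtype.val (hσ z hz hzM)) _ ha

end StabilizesOrbit

theorem finiteDimensional_orbitF {St : Finset (ℤ × ℤ)} {w : ℤ × ℤ → ℂ} {x y : K}
    {E : IntermediateField ℂ K} (hcl : IsAlgClosure E K) (hE : E ≤ orbitF St w x y)
    (hfin : (orbit St w x y).Finite) : FiniteDimensional E (extendScalars hE) := by
  have hT : ({stepEval St w x y} ∪ {z | ∃ a ∈ orbit St w x y, z = a.1 ∨ z = a.2}).Finite := by
    refine (Set.finite_singleton _).union (((hfin.image Prod.fst).union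
      (hfin.image Prod.snd)).subset ?_)
    rintro z ⟨a, ha, rfl | rfl⟩
    exacts [.inl ⟨a, ha, rfl⟩, .inr ⟨a, ha, rfl⟩]
  have := hT.to_subtype
  have := hcl.isAlgebraic
  have := finiteDimensional_adjoin (K := E) (S := {stepEval St w x y} ∪
    {z | ∃ a ∈ orbit St w x y, z = a.1 ∨ z = a.2})
    fun z _ => (Algebra.IsAlgebraic.isAlgebraic (R := E) z).isIntegral
  exact (extendScalars_adjoin hE) ▸ this

/-- The automorphisms of `k(𝒪)` mapping the orbit onto itself. -/
def orbitStabilizer (St : Finset (ℤ × ℤ)) (w : ℤ × ℤ → ℂ) (x y : K) :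
    Subgroup (orbitF St w x y ≃ₐ[ℂ] orbitF St w x y) where
  carrier := {σ | ∀ a : orbitF St w x y × orbitF St w x y,
    ((σ a.1 : K), (σ a.2 : K)) ∈ orbit St w x y ↔ ((a.1 : K), (a.2 : K)) ∈ orbit St w x y}
  one_mem' := fun _ => Iff.rfl
  mul_mem' := fun {_ τ} hσ hτ a => (hσ (τ a.1, τ a.2)).trans (hτ a)
  inv_mem' := by
    intro σ hσ a
    have h1 := hσ (σ.symm a.1, σ.symm a.2)
    simp only [AlgEquiv.apply_symm_apply] at h1
    exact h1.symm

theorem StabilizesOrbit.fixingAuts_le {St : Finset (ℤ × ℤ)} {w : ℤ × ℤ → ℂ} {x y : K}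
    {E : IntermediateField ℂ K} (hst : StabilizesOrbit St w x y E) :
    fixingAuts E (orbitF St w x y) ≤ orbitStabilizer St w x y := by
  intro σ hσ a
  refine ⟨fun h => ?_, hst.fixingAuts_mem_orbit hσ⟩
  have h1 := hst.fixingAuts_mem_orbit (inv_mem hσ) (a := (σ a.1, σ a.2)) h
  change ((σ.symm (σ a.1) : K), (σ.symm (σ a.2) : K)) ∈ _ at h1
  simpa only [AlgEquiv.symm_apply_apply] using h1

theorem finite_orbitStabilizer {St : Finset (ℤ × ℤ)} {w : ℤ × ℤ → ℂ} {x y : K}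
    (hfin : (orbit St w x y).Finite) :
    (orbitStabilizer St w x y : Set (orbitF St w x y ≃ₐ[ℂ] orbitF St w x y)).Finite := by
  have := hfin.to_subtype
  refine Set.Finite.of_injOn (t := {f | ∀ a : orbit St w x y, f a ∈ orbit St w x y})
    (f := fun σ a => ((σ ⟨a.1.1, fst_mem_orbitF a.2⟩ : K), (σ ⟨a.1.2, snd_mem_orbitF a.2⟩ : K)))
    ?_ ?_ (Set.Finite.pi' fun _ => hfin)
  · exact fun σ hσ a => (hσ (⟨a.1.1, fst_mem_orbitF a.2⟩, ⟨a.1.2, snd_mem_orbitF a.2⟩)).2 a.2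
  · intro σ _ τ _ hστ
    have hfst : ∀ a (ha : a ∈ orbit St w x y),
        σ ⟨a.1, fst_mem_orbitF ha⟩ = τ ⟨a.1, fst_mem_orbitF ha⟩ :=
      fun a ha => Subtype.ext (congrArg Prod.fst (congrFun hστ ⟨a, ha⟩))
    have hsnd : ∀ a (ha : a ∈ orbit St w x y),
        σ ⟨a.2, snd_mem_orbitF ha⟩ = τ ⟨a.2, snd_mem_orbitF ha⟩ :=
      fun a ha => Subtype.ext (congrArg Prod.snd (congrFun hστ ⟨a, ha⟩))
    have h1 : (orbitF St w x y).val.comp (σ : orbitF St w x y →ₐ[ℂ] orbitF St w x y) =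
        (orbitF St w x y).val.comp (τ : orbitF St w x y →ₐ[ℂ] orbitF St w x y) := by
      refine adjoin_algHom_ext ℂ ?_
      rintro z (rfl | ⟨a, ha, rfl | rfl⟩)
      · have h0 := self_mem_orbit St w x y
        refine (coe_stepEval St w _ (fst_mem_orbitF h0) (snd_mem_orbitF h0)).symm.trans
          (Eq.trans ?_ (coe_stepEval St w _ (fst_mem_orbitF h0) (snd_mem_orbitF h0)))
        exact congrArg₂ (stepEval St w) (congrArg Subtype.val (hfst _ h0))
          (congrArg Subtype.val (hsnd _ h0))
      · exact congrArg Subtype.val (hfst a ha)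
      · exact congrArg Subtype.val (hsnd a ha)
    exact AlgEquiv.ext fun z => Subtype.ext (DFunLike.congr_fun h1 z)

theorem exists_mem_fixingAuts {E M : IntermediateField ℂ K} (hE : E ≤ M)
    [Normal E (extendScalars hE)] {g : K ≃ₐ[ℂ] K} (hg : g ∈ E.fixingSubgroup) :
    ∃ τ ∈ fixingAuts E M, ∀ m : M, (τ m : K) = g m := by
  have h1 : ∀ m : extendScalars hE,
      ((fixingSubgroupEquiv E ⟨g, hg⟩).restrictNormal (extendScalars hE) m : K) = g m :=
    fun m => AlgEquiv.restrictNormal_apply (extendScalars hE) (fixingSubgroupEquiv E ⟨g, hg⟩) m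
  refine ⟨((fixingSubgroupEquiv E ⟨g, hg⟩).restrictNormal (extendScalars hE)).restrictScalars ℂ,
    fun z hz hzM => Subtype.ext ((h1 ⟨z, hzM⟩).trans ?_), h1⟩
  exact (IntermediateField.mem_fixingSubgroup_iff _ _).1 hg z hz

theorem exists_mem_sup_fixingAuts {E E' M : IntermediateField ℂ K} (hE : E ≤ M) (hE' : E' ≤ M)
    [Normal E (extendScalars hE)] [Normal E' (extendScalars hE')] {g : K ≃ₐ[ℂ] K}
    (hg : g ∈ E.fixingSubgroup ⊔ E'.fixingSubgroup) :
    ∃ τ ∈ fixingAuts E M ⊔ fixingAuts E' M, ∀ m : M, (τ m : K) = g m := by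
  rw [Subgroup.sup_eq_closure] at hg
  induction hg using Subgroup.closure_induction with
  | mem g hg =>
    rcases hg with hg | hg
    · obtain ⟨τ, hτ, h⟩ := exists_mem_fixingAuts hE hg
      exact ⟨τ, Subgroup.mem_sup_left hτ, h⟩
    · obtain ⟨τ, hτ, h⟩ := exists_mem_fixingAuts hE' hg
      exact ⟨τ, Subgroup.mem_sup_right hτ, h⟩
  | one => exact ⟨1, one_mem _, fun _ => rfl⟩
  | mul g g' _ _ ih ih' =>
    obtain ⟨τ, hτ, h⟩ := ih
    obtain ⟨τ', hτ', h'⟩ := ih'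
    exact ⟨τ * τ', mul_mem hτ hτ', fun m => (h (τ' m)).trans (congrArg g (h' m))⟩
  | inv g _ ih =>
    obtain ⟨τ, hτ, h⟩ := ih
    refine ⟨τ⁻¹, inv_mem hτ, fun m => g.injective ?_⟩
    refine (h (τ.symm m)).symm.trans ?_
    rw [AlgEquiv.apply_symm_apply]
    exact (g.apply_symm_apply _).symm

theorem StabilizesOrbit.coeff_mem {St : Finset (ℤ × ℤ)} {w : ℤ × ℤ → ℂ} {x y : K}
    {E : IntermediateField ℂ K} (hst : StabilizesOrbit St w x y E) (hcl : IsAlgClosure E K)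
    (hfin : (orbit St w x y).Finite) (n : ℕ) :
    (∏ a ∈ hfin.toFinset, (Polynomial.X - Polynomial.C a.1)).coeff n ∈ E := by
  have := IsAlgClosure.normal E K
  have := isGalois_of_normal E (L := K)
  have hfix : ∀ σ : K ≃ₐ[E] K, σ ((∏ a ∈ hfin.toFinset,
      (Polynomial.X - Polynomial.C a.1)).coeff n) =
      (∏ a ∈ hfin.toFinset, (Polynomial.X - Polynomial.C a.1)).coeff n := by
    intro σ
    have hinj : Function.Injective (Prod.map σ σ) := σ.injective.prodMap σ.injective
    have himg : hfin.toFinset.image (Prod.map σ σ) = hfin.toFinset := by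
      refine Finset.eq_of_subset_of_card_le ?_ (Finset.card_image_of_injective _ hinj).ge
      refine Finset.image_subset_iff.2 fun a ha => ?_
      exact hfin.mem_toFinset.2 (hst.map_mem_orbit (σ : K →ₐ[E] K) (hfin.mem_toFinset.1 ha))
    have h1 : (∏ a ∈ hfin.toFinset, (Polynomial.X - Polynomial.C a.1)).map (σ : K →+* K) =
        ∏ a ∈ hfin.toFinset, (Polynomial.X - Polynomial.C a.1) := by
      conv_rhs => rw [← himg, Finset.prod_image hinj.injOn]
      simp [Polynomial.map_prod]
    conv_rhs => rw [← h1, Polynomial.coeff_map]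
    rfl
  obtain ⟨e, he⟩ := (InfiniteGalois.mem_range_algebraMap_iff_fixed _).2 hfix
  exact he ▸ e.2

namespace Setting

variable {St : Finset (ℤ × ℤ)} {w : ℤ × ℤ → ℂ} {x y : K}

theorem finite_orbit_of_normal (h : Setting St w x y) {M : IntermediateField ℂ K}
    (h1 : kxF St w x y ≤ M) (h2 : kyF St w x y ≤ M) [Normal (kxF St w x y) (extendScalars h1)]
    [Normal (kyF St w x y) (extendScalars h2)]
    (hfin : ((fixingAuts (kxF St w x y) M ⊔ fixingAuts (kyF St w x y) M :
      Subgroup (M ≃ₐ[ℂ] M)) : Set (M ≃ₐ[ℂ] M)).Finite) : (orbit St w x y).Finite := by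
  refine (hfin.image fun τ => ((τ ⟨x, h1 (x_mem_kxF St w x y)⟩ : K),
    (τ ⟨y, h2 (y_mem_kyF St w x y)⟩ : K))).subset fun a ha => ?_
  obtain ⟨g, hg, rfl⟩ := h.exists_eq_of_mem_orbit ha
  obtain ⟨τ, hτ, hτg⟩ := exists_mem_sup_fixingAuts h1 h2 hg
  exact ⟨τ, hτ, Prod.ext (hτg _) (hτg _)⟩

theorem exists_invariant_of_finite_orbit (h : Setting St w x y)
    (hfin : (orbit St w x y).Finite) :
    ∃ z ∈ kxF St w x y ⊓ kyF St w x y, z ∉ kF St w x y := by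
  by_contra! hc
  set P : Polynomial K := ∏ a ∈ hfin.toFinset, (Polynomial.X - Polynomial.C a.1) with hP
  have hcoeff : ∀ n, P.coeff n ∈ kF St w x y := fun n =>
    hc _ ⟨(stabilizesOrbit_kxF St w x y).coeff_mem h.isAlgClosure_kxF hfin n,
      (stabilizesOrbit_kyF St w x y).coeff_mem h.isAlgClosure_kyF hfin n⟩
  obtain ⟨Q, hQ⟩ := (Polynomial.lifts_iff_coeff_lifts (f := algebraMap (kF St w x y) K) P).2
    fun n => ⟨⟨_, hcoeff n⟩, rfl⟩
  replace hQ : Q.map (algebraMap (kF St w x y) K) = P := hQ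
  refine h.not_isAlgebraic_kF ⟨Q, ?_, ?_⟩
  · rintro rfl
    exact (Polynomial.monic_prod_X_sub_C _ _).ne_zero (hP.symm.trans (by simpa using hQ.symm))
  · rw [← Polynomial.eval_map_algebraMap, hQ, hP, Polynomial.eval_prod]
    exact Finset.prod_eq_zero (hfin.mem_toFinset.2 (self_mem_orbit St w x y)) (by simp)

end Setting

end

/-- the orbit is finite iff there is a subfield `M` of `𝕂`, finite
Galois over `k(x)` and over `k(y)`, whose two Galois groups generate a finite group
of automorphisms of `M`, iff there is a nontrivial Galois invariant
(`k ⊊ k(x) ∩ k(y)`). -/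
theorem stmt11 {K : Type} [Field K] [Algebra ℂ K]
    (St : Finset (ℤ × ℤ)) (w : ℤ × ℤ → ℂ) (x y : K)
    (hset : Setting St w x y) :
    ((orbit St w x y).Finite ↔
      ∃ (M : IntermediateField ℂ K) (h1 : kxF St w x y ≤ M) (h2 : kyF St w x y ≤ M),
        IsGalois ↥(kxF St w x y) ↥(extendScalars h1) ∧
        FiniteDimensional ↥(kxF St w x y) ↥(extendScalars h1) ∧
        IsGalois ↥(kyF St w x y) ↥(extendScalars h2) ∧
        FiniteDimensional ↥(kyF St w x y) ↥(extendScalars h2) ∧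
        ((fixingAuts (kxF St w x y) M ⊔ fixingAuts (kyF St w x y) M :
            Subgroup (↥M ≃ₐ[ℂ] ↥M)) : Set (↥M ≃ₐ[ℂ] ↥M)).Finite) ∧
    ((orbit St w x y).Finite ↔
      ∃ z ∈ kxF St w x y ⊓ kyF St w x y, z ∉ kF St w x y) := by
  refine ⟨⟨fun hfin => ?_, ?_⟩, hset.exists_invariant_of_finite_orbit,
    fun ⟨_, hz, hzk⟩ => hset.finite_orbit_of_invariant hz hzk⟩
  · have hx := stabilizesOrbit_kxF St w x y
    have hy := stabilizesOrbit_kyF St w x y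
    exact ⟨orbitF St w x y, kxF_le_orbitF St w x y, kyF_le_orbitF St w x y,
      hx.isGalois hset.isAlgClosure_kxF _ (S_mem_kxF St w x y),
      finiteDimensional_orbitF hset.isAlgClosure_kxF _ hfin,
      hy.isGalois hset.isAlgClosure_kyF _ (S_mem_kyF St w x y),
      finiteDimensional_orbitF hset.isAlgClosure_kyF _ hfin,
      (finite_orbitStabilizer hfin).subset (sup_le hx.fixingAuts_le hy.fixingAuts_le)⟩
  · rintro ⟨M, h1, h2, _, _, _, _, hfin⟩
    exact hset.finite_orbit_of_normal h1 h2 hfin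

end QuadrantWalk
end
end

section
/- A regular fraction H ∈ ℂ(X,Y,t) admits a Galois decoupling if and only if its evaluation H_{(x,y)} = H(x,y,1/S(x,y)) can be written as f + g with f ∈ k(x) and g ∈ k(y). -/
open IntermediateField
open scoped BigOperators Classical

set_option synthInstance.maxHeartbeats 1000000
set_option maxHeartbeats 1600000

noncomputable section

namespace QuadrantWalk

section KernelIdeal

open MvPolynomial

/-- The polynomial `X^mx * Y^my * S(X,Y)`. -/
def stepPoly (St : Finset (ℤ × ℤ)) (w : ℤ × ℤ → ℂ) (mx my : ℕ) : MvPolynomial (Fin 3) ℂ :=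
  ∑ p ∈ St, C (w p) * X 0 ^ (p.1 + (mx : ℤ)).toNat * X 1 ^ (p.2 + (my : ℤ)).toNat

lemma kernelPoly_eq (St : Finset (ℤ × ℤ)) (w : ℤ × ℤ → ℂ) (mx my : ℕ) :
    kernelPoly St w mx my = X 0 ^ mx * X 1 ^ my - X 2 * stepPoly St w mx my := rfl

/-- The exponent vector of the monomial of `stepPoly` attached to the step `p`. -/
def stepExponent (mx my : ℕ) (p : ℤ × ℤ) : Fin 3 →₀ ℕ :=
  Finsupp.single 0 (p.1 + (mx : ℤ)).toNat + Finsupp.single 1 (p.2 + (my : ℤ)).toNat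

lemma stepExponent_zero (mx my : ℕ) (p : ℤ × ℤ) :
    stepExponent mx my p 0 = (p.1 + (mx : ℤ)).toNat := by
  simp [stepExponent]

lemma stepExponent_one (mx my : ℕ) (p : ℤ × ℤ) :
    stepExponent mx my p 1 = (p.2 + (my : ℤ)).toNat := by
  simp [stepExponent]

lemma stepPoly_eq_sum_monomial (St : Finset (ℤ × ℤ)) (w : ℤ × ℤ → ℂ) (mx my : ℕ) :
    stepPoly St w mx my = ∑ p ∈ St, monomial (stepExponent mx my p) (w p) := by
  refine Finset.sum_congr rfl fun p _ => ?_
  rw [stepExponent, X_pow_eq_monomial, X_pow_eq_monomial, mul_assoc, monomial_mul, one_mul,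
    C_mul_monomial, mul_one]

lemma coeff_stepPoly {St : Finset (ℤ × ℤ)} {w : ℤ × ℤ → ℂ} {mx my : ℕ}
    (hb : ExponentBounds St mx my) {p : ℤ × ℤ} (hp : p ∈ St) :
    coeff (stepExponent mx my p) (stepPoly St w mx my) = w p := by
  rw [stepPoly_eq_sum_monomial, coeff_sum, Finset.sum_eq_single_of_mem p hp]
  · simp
  · intro q hq hqp
    rw [coeff_monomial, if_neg]
    intro h
    have h0 := DFunLike.congr_fun h 0
    have h1 := DFunLike.congr_fun h 1
    rw [stepExponent_zero, stepExponent_zero] at h0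
    rw [stepExponent_one, stepExponent_one] at h1
    have := hb.lowerX p hp
    have := hb.lowerX q hq
    have := hb.lowerY p hp
    have := hb.lowerY q hq
    exact hqp (Prod.ext (by omega) (by omega))

lemma not_X_dvd_stepPoly {St : Finset (ℤ × ℤ)} {w : ℤ × ℤ → ℂ} {mx my : ℕ}
    (hw : ∀ p ∈ St, w p ≠ 0) (hb : ExponentBounds St mx my) {p : ℤ × ℤ} (hp : p ∈ St)
    {i : Fin 3} (hi : stepExponent mx my p i = 0) : ¬ X i ∣ stepPoly St w mx my := by
  rintro ⟨Q, hQ⟩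
  apply hw p hp
  rw [← coeff_stepPoly (w := w) hb hp, hQ, coeff_X_mul', if_neg]
  simpa using hi

lemma not_X_zero_dvd_stepPoly {St : Finset (ℤ × ℤ)} {w : ℤ × ℤ → ℂ} {mx my : ℕ}
    (hw : ∀ p ∈ St, w p ≠ 0) (hb : ExponentBounds St mx my) :
    ¬ X 0 ∣ stepPoly St w mx my := by
  obtain ⟨p, hp, h⟩ := hb.attainX
  exact not_X_dvd_stepPoly hw hb hp (by rw [stepExponent_zero, h]; simp)

lemma not_X_one_dvd_stepPoly {St : Finset (ℤ × ℤ)} {w : ℤ × ℤ → ℂ} {mx my : ℕ}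
    (hw : ∀ p ∈ St, w p ≠ 0) (hb : ExponentBounds St mx my) :
    ¬ X 1 ∣ stepPoly St w mx my := by
  obtain ⟨p, hp, h⟩ := hb.attainY
  exact not_X_dvd_stepPoly hw hb hp (by rw [stepExponent_one, h]; simp)

lemma isRelPrime_kernelPoly_stepPoly {St : Finset (ℤ × ℤ)} {w : ℤ × ℤ → ℂ} {mx my : ℕ}
    (hw : ∀ p ∈ St, w p ≠ 0) (hb : ExponentBounds St mx my) :
    IsRelPrime (kernelPoly St w mx my) (stepPoly St w mx my) := by
  have hX (i : Fin 3) (hi : ¬ X i ∣ stepPoly St w mx my) :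
      IsRelPrime (X i) (stepPoly St w mx my) :=
    ((X_prime (i := i)).irreducible.isRelPrime_iff_not_dvd).2 hi
  have hM : IsRelPrime (X 0 ^ mx * X 1 ^ my) (stepPoly St w mx my) :=
    ((hX 0 (not_X_zero_dvd_stepPoly hw hb)).pow_left).mul_left
      ((hX 1 (not_X_one_dvd_stepPoly hw hb)).pow_left)
  intro d hd hdN
  refine hM ?_ hdN
  rw [kernelPoly_eq] at hd
  simpa using dvd_add hd (hdN.mul_left (X 2))

lemma exists_rename_eq_stepPoly (St : Finset (ℤ × ℤ)) (w : ℤ × ℤ → ℂ) (mx my : ℕ) :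
    ∃ N : MvPolynomial (Fin 2) ℂ, rename Fin.castSucc N = stepPoly St w mx my :=
  ⟨∑ p ∈ St, C (w p) * X 0 ^ (p.1 + (mx : ℤ)).toNat * X 1 ^ (p.2 + (my : ℤ)).toNat,
    by simp [stepPoly]⟩

/-- Pseudo-division by the kernel polynomial with respect to the variable `t`. -/
lemma exists_pseudo_division (St : Finset (ℤ × ℤ)) (w : ℤ × ℤ → ℂ) (mx my : ℕ)
    (P : MvPolynomial (Fin 3) ℂ) :
    ∃ (d : ℕ) (Q : MvPolynomial (Fin 3) ℂ) (R : MvPolynomial (Fin 2) ℂ),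
      stepPoly St w mx my ^ d * P =
        Q * kernelPoly St w mx my + rename Fin.castSucc R := by
  induction P using MvPolynomial.induction_on with
  | C a => exact ⟨0, 0, C a, by simp⟩
  | add P P' hP hP' =>
    obtain ⟨d, Q, R, h⟩ := hP
    obtain ⟨d', Q', R', h'⟩ := hP'
    obtain ⟨N', hN'⟩ := exists_rename_eq_stepPoly St w mx my
    refine ⟨d + d', stepPoly St w mx my ^ d' * Q + stepPoly St w mx my ^ d * Q',
      N' ^ d' * R + N' ^ d * R', ?_⟩
    simp only [map_add, map_mul, map_pow, hN']
    linear_combination stepPoly St w mx my ^ d' * h + stepPoly St w mx my ^ d * h'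
  | mul_X P i hP =>
    obtain ⟨d, Q, R, h⟩ := hP
    induction i using Fin.lastCases with
    | cast i =>
      refine ⟨d, Q * X i.castSucc, R * X i, ?_⟩
      simp only [map_mul, rename_X]
      linear_combination X i.castSucc * h
    | last =>
      refine ⟨d + 1, stepPoly St w mx my * X 2 * Q - rename Fin.castSucc R,
        X 0 ^ mx * X 1 ^ my * R, ?_⟩
      have h2 : (Fin.last 2 : Fin 3) = 2 := rfl
      simp only [map_mul, map_pow, rename_X, Fin.castSucc_zero, Fin.castSucc_one, h2]
      linear_combination stepPoly St w mx my * X 2 * h +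
        rename Fin.castSucc R * kernelPoly_eq St w mx my

variable {K : Type} [Field K] [Algebra ℂ K] {St : Finset (ℤ × ℤ)} {w : ℤ × ℤ → ℂ} {x y : K}
  {mx my : ℕ}

/-- Evaluation at `(x, y, 1/S(x,y))` as an algebra homomorphism. -/
def evalXYHom (St : Finset (ℤ × ℤ)) (w : ℤ × ℤ → ℂ) (x y : K) :
    MvPolynomial (Fin 3) ℂ →ₐ[ℂ] K :=
  aeval ![x, y, (stepEval St w x y)⁻¹]

lemma evalXYHom_rename (R : MvPolynomial (Fin 2) ℂ) :
    evalXYHom St w x y (rename Fin.castSucc R) = aeval ![x, y] R := by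
  rw [evalXYHom, aeval_rename]
  congr 2
  ext i
  fin_cases i <;> rfl

lemma evalXYHom_stepPoly (hx : x ≠ 0) (hy : y ≠ 0) (hb : ExponentBounds St mx my) :
    evalXYHom St w x y (stepPoly St w mx my) = x ^ mx * y ^ my * stepEval St w x y := by
  have key (u : K) (hu : u ≠ 0) (i : ℤ) (m : ℕ) (h : -(m : ℤ) ≤ i) :
      u ^ (i + (m : ℤ)).toNat = u ^ i * u ^ m := by
    rw [← zpow_natCast, Int.toNat_of_nonneg (by omega), zpow_add₀ hu, zpow_natCast]
  rw [stepPoly, stepEval, map_sum, Finset.mul_sum]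
  refine Finset.sum_congr rfl fun p hp => ?_
  simp only [evalXYHom, map_mul, map_pow, aeval_X, aeval_C, Matrix.cons_val_zero,
    Matrix.cons_val_one]
  rw [key x hx _ _ (hb.lowerX p hp), key y hy _ _ (hb.lowerY p hp)]
  ring

lemma Setting.x_ne_zero (hset : Setting St w x y) : x ≠ 0 := hset.indep.ne_zero 0

lemma Setting.y_ne_zero (hset : Setting St w x y) : y ≠ 0 := hset.indep.ne_zero 1

lemma Setting.evalXYHom_stepPoly_ne_zero (hset : Setting St w x y)
    (hb : ExponentBounds St mx my) : evalXYHom St w x y (stepPoly St w mx my) ≠ 0 := by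
  obtain ⟨N', hN'⟩ := exists_rename_eq_stepPoly St w mx my
  intro h
  rw [← hN', evalXYHom_rename] at h
  have h0 := (injective_iff_map_eq_zero _).1 hset.indep N' h
  apply not_X_zero_dvd_stepPoly hset.weight_ne hb
  rw [← hN', h0, map_zero]
  exact dvd_zero _

lemma Setting.stepEval_ne_zero (hset : Setting St w x y) (hb : ExponentBounds St mx my) :
    stepEval St w x y ≠ 0 := by
  have h := hset.evalXYHom_stepPoly_ne_zero hb
  rw [evalXYHom_stepPoly hset.x_ne_zero hset.y_ne_zero hb] at h
  exact right_ne_zero_of_mul h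

lemma Setting.evalXYHom_kernelPoly (hset : Setting St w x y) (hb : ExponentBounds St mx my) :
    evalXYHom St w x y (kernelPoly St w mx my) = 0 := by
  have hs := hset.stepEval_ne_zero hb
  rw [kernelPoly_eq, map_sub, map_mul _ (X 2),
    evalXYHom_stepPoly hset.x_ne_zero hset.y_ne_zero hb]
  simp only [evalXYHom, map_mul, map_pow, aeval_X, Matrix.cons_val_zero, Matrix.cons_val_one,
    Matrix.cons_val]
  field_simp
  ring

/-- The kernel polynomial generates the ideal of polynomials vanishing at
`(x, y, 1/S(x,y))`. -/
lemma Setting.kernelPoly_dvd_iff (hset : Setting St w x y) (hb : ExponentBounds St mx my)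
    (P : MvPolynomial (Fin 3) ℂ) :
    kernelPoly St w mx my ∣ P ↔ evalXYHom St w x y P = 0 := by
  constructor
  · rintro ⟨Q, rfl⟩
    rw [map_mul, hset.evalXYHom_kernelPoly hb, zero_mul]
  · intro hP
    obtain ⟨d, Q, R, h⟩ := exists_pseudo_division St w mx my P
    have hR : aeval ![x, y] R = 0 := by
      have := congrArg (evalXYHom St w x y) h
      rw [map_mul, map_add, map_mul, hP, hset.evalXYHom_kernelPoly hb, evalXYHom_rename] at this
      simpa using this.symm
    have hR0 := (injective_iff_map_eq_zero _).1 hset.indep R hR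
    rw [hR0, map_zero, add_zero] at h
    have hrel := (isRelPrime_kernelPoly_stepPoly hset.weight_ne hb).pow_right (n := d)
    exact hrel.dvd_of_dvd_mul_left ⟨Q, by rw [h, mul_comm]⟩

end KernelIdeal

section Decoupling

open MvPolynomial

variable {K : Type} [Field K] [Algebra ℂ K] {St : Finset (ℤ × ℤ)} {w : ℤ × ℤ → ℂ} {x y : K}
  {mx my : ℕ}

lemma aeval_mem_of_mem_supported {σ : Type*} {v : σ → K} {s : Set σ} {E : IntermediateField ℂ K}
    (hE : ∀ i ∈ s, v i ∈ E) {P : MvPolynomial σ ℂ} (hP : P ∈ supported ℂ s) :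
    aeval v P ∈ E := by
  have h : supported ℂ s ≤ E.toSubalgebra.comap (aeval v) := by
    rw [supported, Algebra.adjoin_le_iff]
    rintro _ ⟨i, hi, rfl⟩
    simpa using hE i hi
  exact h hP

lemma exists_supported_div_eq {σ : Type*} {v : σ → K} {s : Set σ} {z : K}
    (hz : z ∈ adjoin ℂ (v '' s)) :
    ∃ P ∈ supported ℂ s, ∃ Q ∈ supported ℂ s, aeval v Q ≠ 0 ∧ z = aeval v P / aeval v Q := by
  have hmap : Algebra.adjoin ℂ (v '' s) = (supported ℂ s).map (aeval v) := by
    rw [supported, AlgHom.map_adjoin, Set.image_image]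
    simp
  obtain ⟨a, ha, b, hb, rfl⟩ := mem_adjoin_iff_div.1 hz
  rw [hmap] at ha hb
  obtain ⟨P, hP, rfl⟩ := ha
  obtain ⟨Q, hQ, rfl⟩ := hb
  by_cases h : aeval v Q = 0
  · exact ⟨0, zero_mem _, 1, one_mem _, by simp, by simp [h]⟩
  · exact ⟨P, hP, Q, hQ, h, rfl⟩

lemma adjoin_pair_inv (u s : K) : adjoin ℂ {u, s⁻¹} = adjoin ℂ {u, s} := by
  have key (a : K) : adjoin ℂ {u, a⁻¹} ≤ adjoin ℂ {u, a} := by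
    rw [adjoin_le_iff]
    rintro z (rfl | rfl)
    · exact subset_adjoin ℂ _ (Set.mem_insert _ _)
    · exact inv_mem (subset_adjoin ℂ _ (Set.mem_insert_of_mem _ rfl))
  exact le_antisymm (key s) (by simpa using key s⁻¹)

lemma kxF_eq_adjoin_image :
    kxF St w x y = adjoin ℂ (![x, y, (stepEval St w x y)⁻¹] '' ({0, 2} : Set (Fin 3))) := by
  rw [Set.image_pair]
  exact (adjoin_pair_inv _ _).symm

lemma kyF_eq_adjoin_image :
    kyF St w x y = adjoin ℂ (![x, y, (stepEval St w x y)⁻¹] '' ({1, 2} : Set (Fin 3))) := by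
  rw [Set.image_pair]
  exact (adjoin_pair_inv _ _).symm

lemma evalXYHom_mem_kxF {P : MvPolynomial (Fin 3) ℂ} (hP : P ∈ supported ℂ {0, 2}) :
    evalXYHom St w x y P ∈ kxF St w x y := by
  rw [kxF_eq_adjoin_image]
  exact aeval_mem_of_mem_supported (fun i hi => subset_adjoin ℂ _ (Set.mem_image_of_mem _ hi)) hP

lemma evalXYHom_mem_kyF {P : MvPolynomial (Fin 3) ℂ} (hP : P ∈ supported ℂ {1, 2}) :
    evalXYHom St w x y P ∈ kyF St w x y := by
  rw [kyF_eq_adjoin_image]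
  exact aeval_mem_of_mem_supported (fun i hi => subset_adjoin ℂ _ (Set.mem_image_of_mem _ hi)) hP

lemma toFF_ne_zero {P : MvPolynomial (Fin 3) ℂ} (hP : P ≠ 0) : toFF P ≠ 0 :=
  (map_ne_zero_iff _ (IsFractionRing.injective (MvPolynomial (Fin 3) ℂ) FF)).2 hP

/-- A decomposition of fractions is equivalent to its form with denominators cleared. -/
lemma toFF_div_eq_iff {A B F₁ F₂ G₁ G₂ T R₁ R₂ : MvPolynomial (Fin 3) ℂ}
    (hB : B ≠ 0) (hF : F₂ ≠ 0) (hG : G₂ ≠ 0) (hR : R₂ ≠ 0) :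
    toFF A / toFF B = toFF F₁ / toFF F₂ + toFF G₁ / toFF G₂ + toFF T * (toFF R₁ / toFF R₂) ↔
      A * (F₂ * G₂ * R₂) = ((F₁ * G₂ + F₂ * G₁) * R₂ + F₂ * G₂ * (T * R₁)) * B := by
  rw [← mul_div_assoc, div_add_div _ _ (toFF_ne_zero hF) (toFF_ne_zero hG),
    div_add_div _ _ (mul_ne_zero (toFF_ne_zero hF) (toFF_ne_zero hG)) (toFF_ne_zero hR),
    div_eq_div_iff (toFF_ne_zero hB)
      (mul_ne_zero (mul_ne_zero (toFF_ne_zero hF) (toFF_ne_zero hG)) (toFF_ne_zero hR))]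
  simp only [toFF, ← map_mul, ← map_add]
  exact (IsFractionRing.injective (MvPolynomial (Fin 3) ℂ) FF).eq_iff

end Decoupling

/-- a regular fraction `H = A/B` admits a Galois decoupling iff its
evaluation `H_{(x,y)} = H(x,y,1/S(x,y))` can be written as `f + g` with `f ∈ k(x)`
and `g ∈ k(y)`. -/
theorem stmt13 {K : Type} [Field K] [Algebra ℂ K]
    (St : Finset (ℤ × ℤ)) (w : ℤ × ℤ → ℂ) (x y : K) (mx my : ℕ)
    (hset : Setting St w x y) (hb : ExponentBounds St mx my)
    (A B : MvPolynomial (Fin 3) ℂ) (hAB : IsRelPrime A B)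
    (hB : ¬ kernelPoly St w mx my ∣ B) :
    AdmitsDecoupling St w mx my A B ↔
      ∃ f ∈ kxF St w x y, ∃ g ∈ kyF St w x y,
        fracEval St w x y A B (x, y) = f + g := by
  have dvd_iff := hset.kernelPoly_dvd_iff hb
  have ne_zero {P : MvPolynomial (Fin 3) ℂ} (hP : ¬ kernelPoly St w mx my ∣ P) : P ≠ 0 :=
    fun h => hP (h ▸ dvd_zero _)
  change _ ↔ ∃ f ∈ kxF St w x y, ∃ g ∈ kyF St w x y,
    evalXYHom St w x y A / evalXYHom St w x y B = f + g
  have hB' := mt (dvd_iff B).2 hB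
  constructor
  · rintro ⟨F₁, F₂, G₁, G₂, R₁, R₂, hF₁, hF₂, hG₁, hG₂, hF, hG, hR, h⟩
    rw [toFF_div_eq_iff (ne_zero hB) (ne_zero hF) (ne_zero hG) (ne_zero hR)] at h
    refine ⟨_, div_mem (evalXYHom_mem_kxF hF₁) (evalXYHom_mem_kxF hF₂),
      _, div_mem (evalXYHom_mem_kyF hG₁) (evalXYHom_mem_kyF hG₂), ?_⟩
    have hF' := mt (dvd_iff F₂).2 hF
    have hG' := mt (dvd_iff G₂).2 hG
    have hR' := mt (dvd_iff R₂).2 hR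
    have h' := congrArg (evalXYHom St w x y) h
    simp only [map_mul, map_add, hset.evalXYHom_kernelPoly hb] at h'
    rw [div_add_div _ _ hF' hG', div_eq_div_iff hB' (mul_ne_zero hF' hG')]
    apply mul_right_cancel₀ hR'
    linear_combination h'
  · rintro ⟨f, hf, g, hg, h⟩
    rw [kxF_eq_adjoin_image] at hf
    rw [kyF_eq_adjoin_image] at hg
    obtain ⟨F₁, hF₁, F₂, hF₂, hF', rfl⟩ := exists_supported_div_eq hf
    obtain ⟨G₁, hG₁, G₂, hG₂, hG', rfl⟩ := exists_supported_div_eq hg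
    change evalXYHom St w x y F₂ ≠ 0 at hF'
    change evalXYHom St w x y G₂ ≠ 0 at hG'
    change _ = evalXYHom St w x y F₁ / evalXYHom St w x y F₂ +
      evalXYHom St w x y G₁ / evalXYHom St w x y G₂ at h
    have hF := mt (dvd_iff F₂).1 hF'
    have hG := mt (dvd_iff G₂).1 hG'
    have hR : ¬ kernelPoly St w mx my ∣ B * (F₂ * G₂) := by
      rw [dvd_iff, map_mul, map_mul]
      exact mul_ne_zero hB' (mul_ne_zero hF' hG')
    rw [div_add_div _ _ hF' hG', div_eq_div_iff hB' (mul_ne_zero hF' hG')] at h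
    obtain ⟨R, hR₁⟩ := (dvd_iff (A * (F₂ * G₂) - (F₁ * G₂ + F₂ * G₁) * B)).2
      (by simpa only [map_sub, map_mul, map_add, sub_eq_zero] using h)
    refine ⟨F₁, F₂, G₁, G₂, R, B * (F₂ * G₂), hF₁, hF₂, hG₁, hG₂, hF, hG, hR, ?_⟩
    rw [toFF_div_eq_iff (ne_zero hB) (ne_zero hF) (ne_zero hG) (ne_zero hR)]
    linear_combination B * (F₂ * G₂) * hR₁

end QuadrantWalk
end
end
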